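/- Special decomposition of positive braids: for every n ≥ 1 and every braid β in the positive braid monoid B_n^+ (the submonoid of B_∞ generated by σ₁, …, σ_{n−1}), there exists a unique n-tuple (β₁, …, βₙ) of special braids satisfying β = β₁ · sh(β₂) ⋯ sh^{n−1}(βₙ). -/

import Mathlib

/-- The braid relations on generators indexed by `ℕ` (generator `i` stands for
the Artin generator `σ_{i+1}` of the paper). -/
def braidRels : Set (FreeGroup ℕ) :=
  {r | (∃ i j : ℕ, i + 2 ≤ j ∧
          r = .of i * .of j * (.of i)⁻¹ * (.of j)⁻¹) ∨
       (∃ i : ℕ,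
          r = .of i * .of (i + 1) * .of i *
              (.of (i + 1) * .of i * .of (i + 1))⁻¹)}

/-- The braid group on infinitely many strands. -/
abbrev Binf : Type := PresentedGroup braidRels

/-- `σ i` is the Artin generator `σ_{i+1}` of the paper (0-indexed). -/
def σ (i : ℕ) : Binf := PresentedGroup.of i

lemma mk_rel_eq_one {r : FreeGroup ℕ} (h : r ∈ braidRels) :
    PresentedGroup.mk braidRels r = 1 :=
  (QuotientGroup.eq_one_iff r).mpr (Subgroup.subset_normalClosure h)

lemma shift_lift_eq_one :
    ∀ r ∈ braidRels, FreeGroup.lift (fun n => σ (n + 1)) r = 1 := by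
  intro r hr
  have key : ∀ s ∈ braidRels, FreeGroup.lift (fun n => σ (n + 1)) s
      = PresentedGroup.mk braidRels (FreeGroup.map (· + 1) s) := by
    intro s _
    have : (FreeGroup.lift (fun n => σ (n + 1)) : FreeGroup ℕ →* Binf)
        = (PresentedGroup.mk braidRels).comp (FreeGroup.map (· + 1)) := by
      apply FreeGroup.ext_hom
      intro x
      simp [σ, PresentedGroup.of]
    rw [this]; rfl
  rw [key r hr]
  apply mk_rel_eq_one
  rcases hr with ⟨i, j, hij, rfl⟩ | ⟨i, rfl⟩
  · exact Or.inl ⟨i + 1, j + 1, by omega, by simp⟩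
  · exact Or.inr ⟨i + 1, by simp⟩

/-- The shift endomorphism of the braid group, mapping `σ i` to `σ (i+1)`. -/
def sh : Binf →* Binf := PresentedGroup.toGroup shift_lift_eq_one

@[simp] lemma sh_σ (i : ℕ) : sh (σ i) = σ (i + 1) :=
  PresentedGroup.toGroup.of shift_lift_eq_one

/-- The shifted-conjugation (selfdistributive) operation on `Binf`:
`β₁ ▷ β₂ = β₁ · sh β₂ · σ₁ · (sh β₁)⁻¹`. -/
def sc (β₁ β₂ : Binf) : Binf := β₁ * sh β₂ * σ 0 * (sh β₁)⁻¹

/-- The set of special braids: the smallest subset of `Binf` containing the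
unit braid and closed under the shifted-conjugation operation `sc`. -/
def Special : Set Binf :=
  {x | ∀ P : Binf → Prop, P 1 → (∀ a b, P a → P b → P (sc a b)) → P x}

/-- The shifted product `∏^sh(β₁, …, βₙ) = β₁ · sh β₂ ⋯ sh^{n-1} βₙ`. -/
def shProd : List Binf → Binf
  | [] => 1
  | a :: t => a * sh (shProd t)

/-- The positive braid monoid `B_n⁺`: the submonoid of `Binf` generated by
the paper's `σ₁, …, σ_{n-1}` (our `σ 0, …, σ (n-2)`). -/
def BfinPos (n : ℕ) : Submonoid Binf := Submonoid.closure (σ '' {i | i + 2 ≤ n})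

/-!
Braids act by the Hurwitz action on sequences of elements of a rack. Take the rack of integer
plane vectors with `u ◃ v = det(u, v) u - v`, and sequences in a suitable convex position: then a
σ-positive braid turns the first vector strictly in one direction, whereas a shifted braid fixes
it, so no shifted braid is σ-positive. On the other hand, `▷` is left self-distributive, and any
two elements `a`, `b` of a shelf with one generator are comparable for iterated left divisibility;
for distinct special braids this makes `a⁻¹ b` or `b⁻¹ a` σ-positive. Hence a special braid is
determined by its class modulo shifted braids on the right, which gives uniqueness one entry at a
time. For existence, multiplying a decomposition by `σ i` on the right amounts to replacing its
neighbouring entries `a`, `b` at position `i` by `a ▷ b`, `a`.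
-/

open Filter Function Relation
open scoped Quandles

/-! ### Braids and the shift -/

theorem σ_commute {i j : ℕ} (h : i + 2 ≤ j) : Commute (σ i) (σ j) := by
  have := mk_rel_eq_one (Or.inl ⟨i, j, h, rfl⟩)
  rwa [map_mul, map_mul, map_mul, map_inv, map_inv, mul_inv_eq_one, mul_inv_eq_iff_eq_mul] at this

theorem σ_braid (i : ℕ) : σ i * σ (i + 1) * σ i = σ (i + 1) * σ i * σ (i + 1) := by
  have := mk_rel_eq_one (Or.inr ⟨i, rfl⟩)
  rwa [map_mul, map_inv, mul_inv_eq_one] at this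

@[elab_as_elim]
theorem braid_induction {p : Binf → Prop} (one : p 1) (gen : ∀ i, p (σ i))
    (mul : ∀ a b, p a → p b → p (a * b)) (inv : ∀ a, p a → p a⁻¹) (b : Binf) : p b := by
  have hb : b ∈ Subgroup.closure (Set.range (PresentedGroup.of (rels := braidRels))) := by
    rw [PresentedGroup.closure_range_of]
    exact Subgroup.mem_top b
  induction hb using Subgroup.closure_induction with
  | mem _ h => obtain ⟨i, rfl⟩ := h; exact gen i
  | one => exact one
  | mul a b _ _ ha hb => exact mul a b ha hb
  | inv a _ ha => exact inv a ha

theorem σ_zero_commute_sh_sh (b : Binf) : Commute (σ 0) (sh (sh b)) := by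
  induction b using braid_induction with
  | one => simp only [map_one, Commute.one_right]
  | gen i => simpa only [sh_σ] using σ_commute (by omega)
  | mul a b ha hb => simpa only [map_mul] using ha.mul_right hb
  | inv a ha => simpa only [map_inv] using ha.inv_right

/-- The braid `σ₁ ⋯ σₙ` of the paper's numbering, which conjugates `σ i` to `σ (i + 1)` for
`i + 1 < n`. -/
def ascending : ℕ → Binf
  | 0 => 1
  | n + 1 => ascending n * σ n

theorem ascending_commute_σ {n j : ℕ} (h : n + 1 ≤ j) : Commute (ascending n) (σ j) := by
  induction n with
  | zero => exact Commute.one_left _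
  | succ n ih => exact (ih (by omega)).mul_left (σ_commute (by omega))

theorem ascending_semiconj_σ {n i : ℕ} (h : i + 2 ≤ n) :
    SemiconjBy (ascending n) (σ i) (σ (i + 1)) := by
  induction n, h using Nat.le_induction with
  | base =>
    change ascending i * σ i * σ (i + 1) * σ i = σ (i + 1) * (ascending i * σ i * σ (i + 1))
    calc
      _ = ascending i * (σ i * σ (i + 1) * σ i) := by simp only [mul_assoc]
      _ = ascending i * σ (i + 1) * (σ i * σ (i + 1)) := by
        rw [σ_braid]
        simp only [mul_assoc]
      _ = σ (i + 1) * ascending i * (σ i * σ (i + 1)) := by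
        rw [(ascending_commute_σ le_rfl).eq]
      _ = _ := by simp only [mul_assoc]
  | succ n hn ih => exact ih.mul_left (σ_commute hn).symm.semiconjBy

theorem eventually_ascending_semiconj_sh (b : Binf) :
    ∀ᶠ n in atTop, SemiconjBy (ascending n) b (sh b) := by
  induction b using braid_induction with
  | one => simp only [map_one, SemiconjBy.one_right, eventually_true]
  | gen i =>
    filter_upwards [eventually_ge_atTop (i + 2)] with n hn
    simpa only [sh_σ] using ascending_semiconj_σ hn
  | mul a b ha hb =>
    filter_upwards [ha, hb] with n ha hb
    simpa only [map_mul] using ha.mul_right hb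
  | inv a ha =>
    filter_upwards [ha] with n ha
    simpa only [map_inv] using ha.inv_right

theorem sh_injective : Injective sh := by
  refine (injective_iff_map_eq_one sh).mpr fun b hb => ?_
  obtain ⟨n, hn⟩ := (eventually_ascending_semiconj_sh b).exists
  rwa [hb, SemiconjBy, one_mul, mul_eq_left] at hn

theorem sc_self_distrib (a b c : Binf) : sc a (sc b c) = sc (sc a b) (sc a c) := by
  have ha := σ_zero_commute_sh_sh a
  have hb := σ_zero_commute_sh_sh b
  have hc := σ_zero_commute_sh_sh c
  symm
  calc sc (sc a b) (sc a c)
      = a * sh b * (σ 0 * sh (sh c)) * σ 1 * ((sh (sh a))⁻¹ * σ 0 * sh (sh a)) * (σ 1)⁻¹ *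
          (sh (sh b))⁻¹ * (sh a)⁻¹ := by
        simp only [sc, map_mul, map_inv, sh_σ, zero_add]
        group
    _ = a * sh b * (sh (sh c) * σ 0) * σ 1 * σ 0 * (σ 1)⁻¹ * (sh (sh b))⁻¹ * (sh a)⁻¹ := by
        rw [hc.eq, mul_assoc _ (σ 0) (sh (sh a)), ha.eq, inv_mul_cancel_left]
    _ = a * sh b * sh (sh c) * (σ 0 * σ 1 * σ 0) * (σ 1)⁻¹ * (sh (sh b))⁻¹ * (sh a)⁻¹ := by
        simp only [mul_assoc]
    _ = a * sh b * sh (sh c) * σ 1 * (σ 0 * (sh (sh b))⁻¹) * (sh a)⁻¹ := by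
        rw [σ_braid 0]
        group
    _ = a * sh b * sh (sh c) * σ 1 * ((sh (sh b))⁻¹ * σ 0) * (sh a)⁻¹ := by rw [hb.inv_right.eq]
    _ = sc a (sc b c) := by
        simp only [sc, map_mul, map_inv, sh_σ, zero_add, mul_assoc]

instance : Shelf Binf where
  act := sc
  self_distrib := sc_self_distrib _ _ _

/-! ### The Hurwitz action on sequences in a rack -/

section Hurwitz

variable {R : Type*} [Rack R]

theorem act_invAct_distrib (x y z : R) : x ◃ y ◃⁻¹ z = (x ◃ y) ◃⁻¹ (x ◃ z) := by
  rw [← Rack.left_cancel (x ◃ y), Rack.right_inv, ← Shelf.self_distrib, Rack.right_inv]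

/-- The Hurwitz move on sequences in a rack: `(vᵢ, vᵢ₊₁)` becomes `(vᵢ ◃ vᵢ₊₁, vᵢ)`. -/
def hurwitzMove (i : ℕ) : Equiv.Perm (ℕ → R) where
  toFun v := update (update v i (v i ◃ v (i + 1))) (i + 1) (v i)
  invFun v := update (update v i (v (i + 1))) (i + 1) (v (i + 1) ◃⁻¹ v i)
  left_inv v := by
    ext k
    grind [update_apply, Rack.left_inv]
  right_inv v := by
    ext k
    grind [update_apply, Rack.right_inv]

theorem hurwitzMove_apply (i : ℕ) (v : ℕ → R) (k : ℕ) : hurwitzMove i v k =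
    if k = i + 1 then v i else if k = i then v i ◃ v (i + 1) else v k := by
  simp only [hurwitzMove, Equiv.coe_fn_mk, update_apply]

theorem hurwitzMove_commute {i j : ℕ} (h : i + 2 ≤ j) :
    Commute (hurwitzMove i : Equiv.Perm (ℕ → R)) (hurwitzMove j) := by
  ext v k
  simp only [Equiv.Perm.mul_apply, hurwitzMove_apply]
  grind

theorem hurwitzMove_braid (i : ℕ) :
    (hurwitzMove i * hurwitzMove (i + 1) * hurwitzMove i : Equiv.Perm (ℕ → R)) =
      hurwitzMove (i + 1) * hurwitzMove i * hurwitzMove (i + 1) := by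
  ext v k
  have := Shelf.self_distrib (x := v i) (y := v (i + 1)) (z := v (i + 2))
  simp only [Equiv.Perm.mul_apply, hurwitzMove_apply]
  grind

theorem lift_hurwitzMove_eq_one :
    ∀ r ∈ braidRels, FreeGroup.lift (hurwitzMove : ℕ → Equiv.Perm (ℕ → R)) r = 1 := by
  rintro _ (⟨i, j, h, rfl⟩ | ⟨i, rfl⟩)
  · simp only [map_mul, map_inv, FreeGroup.lift_apply_of]
    rw [mul_inv_eq_one, mul_inv_eq_iff_eq_mul]
    exact hurwitzMove_commute h
  · simpa only [map_mul, map_inv, FreeGroup.lift_apply_of, mul_inv_eq_one]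
      using hurwitzMove_braid i

variable (R) in
/-- The Hurwitz action of braids on sequences in a rack. -/
def hurwitz : Binf →* Equiv.Perm (ℕ → R) := PresentedGroup.toGroup lift_hurwitzMove_eq_one

@[simp]
theorem hurwitz_σ (i : ℕ) : hurwitz R (σ i) = hurwitzMove i :=
  PresentedGroup.toGroup.of lift_hurwitzMove_eq_one

theorem hurwitz_sh_apply_zero (b : Binf) (v : ℕ → R) : hurwitz R (sh b) v 0 = v 0 := by
  induction b using braid_induction generalizing v with
  | one => simp only [map_one, Equiv.Perm.one_apply]
  | gen i => simp [hurwitzMove_apply]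
  | mul a b ha hb => simp only [map_mul, Equiv.Perm.mul_apply, ha, hb]
  | inv a ha =>
    rw [map_inv, map_inv, ← ha ((hurwitz R (sh a))⁻¹ v), ← Equiv.Perm.mul_apply, mul_inv_cancel,
      Equiv.Perm.one_apply]

end Hurwitz

/-! ### The transvection rack of the plane -/

/-- The lattice `ℤ²`, made into a rack by the negated transvections `v ↦ det(u, v) u - v`. -/
@[ext]
structure Plane where
  x : ℤ
  y : ℤ

namespace Plane

/-- The standard symplectic form; on vectors of the upper half-plane, `0 < det u v` says that `v`
lies counterclockwise from `u`. -/
def det (u v : Plane) : ℤ := u.x * v.y - u.y * v.x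

instance : Rack Plane where
  act u v := ⟨det u v * u.x - v.x, det u v * u.y - v.y⟩
  self_distrib := by intros; ext <;> simp only [det] <;> ring
  invAct u v := ⟨det v u * u.x - v.x, det v u * u.y - v.y⟩
  left_inv u v := by ext <;> simp only [det] <;> ring
  right_inv u v := by ext <;> simp only [det] <;> ring

theorem act_def (u v : Plane) : u ◃ v = ⟨det u v * u.x - v.x, det u v * u.y - v.y⟩ := rfl

theorem invAct_def (u v : Plane) : u ◃⁻¹ v = ⟨det v u * u.x - v.x, det v u * u.y - v.y⟩ := rfl

theorem det_act_act (u v w : Plane) : det (u ◃ v) (u ◃ w) = det v w := by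
  simp only [act_def, det]
  ring

theorem det_invAct_invAct (u v w : Plane) : det (u ◃⁻¹ v) (u ◃⁻¹ w) = det v w := by
  rw [← det_act_act u, Rack.right_inv, Rack.right_inv]

theorem det_act_left (u v : Plane) : det (u ◃ v) u = det u v := by
  simp only [act_def, det]
  ring

theorem det_invAct_right (u v : Plane) : det u (u ◃⁻¹ v) = det v u := by
  simp only [invAct_def, det]
  ring

theorem det_self_invAct (u v : Plane) : det v (u ◃⁻¹ v) = det v u ^ 2 := by
  simp only [invAct_def, det]
  ring

theorem det_mul_y (u v w : Plane) : det u w * v.y = det u v * w.y + det v w * u.y := by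
  simp only [det]
  ring

theorem det_pos_trans {u v w : Plane} (hu : 0 ≤ u.y) (hv : 0 < v.y) (hw : 0 < w.y)
    (huv : 0 < det u v) (hvw : 0 < det v w) : 0 < det u w := by
  refine pos_of_mul_pos_left ?_ hv.le
  rw [det_mul_y]
  positivity

theorem y_pos_of_between {u v w : Plane} (hu : 0 ≤ u.y) (hw : 0 < w.y) (huv : 0 < det u v)
    (hvw : 0 < det v w) (huw : 0 < det u w) : 0 < v.y := by
  refine pos_of_mul_pos_right ?_ huw.le
  rw [det_mul_y]
  positivity

/-- The sequence `c₀, v₀, c₁, v₁, …` runs counterclockwise in the upper half-plane from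
`c₀ = (1, 0)`, where `vₙ ◃⁻¹ ·` moves `cₙ` to `cₙ₊₁`. That `cₙ₊₁` lies counterclockwise from `vₙ`
is automatic, see `Plane.det_invAct_right`. -/
structure Interlaces (c v : ℕ → Plane) : Prop where
  zero_eq : c 0 = ⟨1, 0⟩
  succ_eq (n : ℕ) : c (n + 1) = v n ◃⁻¹ c n
  det_pos (n : ℕ) : 0 < det (c n) (v n)
  y_succ_pos (n : ℕ) : 0 < (c (n + 1)).y

namespace Interlaces

variable {c v : ℕ → Plane}

theorem act_succ (h : Interlaces c v) (n : ℕ) : v n ◃ c (n + 1) = c n := by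
  rw [h.succ_eq, Rack.right_inv]

theorem det_succ_pos (h : Interlaces c v) (n : ℕ) : 0 < det (v n) (c (n + 1)) := by
  rw [h.succ_eq, det_invAct_right]
  exact h.det_pos n

theorem y_nonneg (h : Interlaces c v) : ∀ n, 0 ≤ (c n).y
  | 0 => by rw [h.zero_eq]
  | n + 1 => (h.y_succ_pos n).le

theorem y_right_pos (h : Interlaces c v) (n : ℕ) : 0 < (v n).y := by
  refine y_pos_of_between (h.y_nonneg n) (h.y_succ_pos n) (h.det_pos n) (h.det_succ_pos n) ?_
  rw [h.succ_eq, det_self_invAct]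
  exact pow_pos (h.det_pos n) 2

theorem det_right_pos (h : Interlaces c v) (n : ℕ) : 0 < det (v n) (v (n + 1)) :=
  det_pos_trans (h.y_right_pos n).le (h.y_succ_pos n) (h.y_right_pos (n + 1)) (h.det_succ_pos n)
    (h.det_pos (n + 1))

theorem update_update {i : ℕ} {m p q : Plane} (h : Interlaces c v) (hm : m = p ◃⁻¹ c i)
    (hm' : c (i + 2) = q ◃⁻¹ m) (hp : 0 < det (c i) p) (hq : 0 < det m q) (hy : 0 < m.y) :
    Interlaces (update c (i + 1) m) (update (update v i p) (i + 1) q) where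
  zero_eq := by rw [update_of_ne (by omega), h.zero_eq]
  succ_eq n := by grind [update_apply, h.succ_eq n]
  det_pos n := by grind [update_apply, h.det_pos n]
  y_succ_pos n := by grind [update_apply, h.y_succ_pos n]

theorem update_hurwitzMove (h : Interlaces c v) (i : ℕ) :
    Interlaces (update c (i + 1) (v i ◃ c (i + 2))) (hurwitzMove i v) := by
  have hmid : v i ◃ c (i + 2) = (v i ◃ v (i + 1)) ◃⁻¹ c i := by
    rw [h.succ_eq (i + 1), act_invAct_distrib, h.act_succ]
  have hleft : 0 < det (c i) (v i ◃ v (i + 1)) := by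
    rw [← h.act_succ i, det_act_act]
    exact h.det_pos (i + 1)
  have hright : 0 < det (v i ◃ c (i + 2)) (v i) := by
    rw [det_act_left]
    exact det_pos_trans (h.y_right_pos i).le (h.y_right_pos (i + 1)) (h.y_succ_pos (i + 1))
      (h.det_right_pos i) (h.det_succ_pos (i + 1))
  have hy : 0 < (v i ◃ c (i + 2)).y := by
    refine y_pos_of_between (h.y_nonneg i) (h.y_right_pos i) ?_ hright (h.det_pos i)
    rw [hmid, det_self_invAct]
    exact pow_pos hleft 2
  exact h.update_update hmid (Rack.left_inv (v i) _).symm hleft hright hy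

theorem update_hurwitzMove_symm (h : Interlaces c v) (i : ℕ) :
    Interlaces (update c (i + 1) (v (i + 1) ◃⁻¹ c i)) ((hurwitzMove i).symm v) := by
  have hmid : c (i + 2) = (v (i + 1) ◃⁻¹ v i) ◃⁻¹ (v (i + 1) ◃⁻¹ c i) := by
    rw [h.succ_eq, h.succ_eq, Rack.self_distrib_inv]
  have hleft : 0 < det (c i) (v (i + 1)) :=
    det_pos_trans (h.y_nonneg i) (h.y_right_pos i) (h.y_right_pos (i + 1)) (h.det_pos i)
      (h.det_right_pos i)
  have hright : 0 < det (v (i + 1) ◃⁻¹ c i) (v (i + 1) ◃⁻¹ v i) := by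
    rw [det_invAct_invAct]
    exact h.det_pos i
  have hy : 0 < (v (i + 1) ◃⁻¹ c i).y := by
    refine y_pos_of_between (h.y_right_pos (i + 1)).le (h.y_succ_pos (i + 1)) ?_ ?_
      (h.det_succ_pos (i + 1))
    · rwa [det_invAct_right]
    · rw [hmid, det_self_invAct]
      exact pow_pos hright 2
  exact h.update_update rfl hmid hleft hright hy

end Interlaces

/-- The sequences of vectors in convex position on which the Hurwitz action is monotone. -/
def Admissible (v : ℕ → Plane) : Prop := ∃ c, Interlaces c v

theorem exists_admissible : ∃ v, Admissible v := by
  refine ⟨fun n => ⟨2, 2 * n + 1⟩, fun n => ⟨1, n⟩, ⟨rfl, fun n => ?_, fun n => ?_, fun n => ?_⟩⟩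
  · ext <;> simp only [invAct_def, det, Nat.cast_succ] <;> ring
  · simp only [det]
    omega
  · exact Int.natCast_succ_pos n

theorem admissible_hurwitz_iff (b : Binf) (v : ℕ → Plane) :
    Admissible (hurwitz Plane b v) ↔ Admissible v := by
  induction b using braid_induction generalizing v with
  | one => simp only [map_one, Equiv.Perm.one_apply]
  | gen i =>
    rw [hurwitz_σ]
    refine ⟨fun ⟨_, h⟩ => ?_, fun ⟨_, h⟩ => ⟨_, h.update_hurwitzMove i⟩⟩
    rw [← (hurwitzMove i).symm_apply_apply v]
    exact ⟨_, h.update_hurwitzMove_symm i⟩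
  | mul a b ha hb => rw [map_mul, Equiv.Perm.mul_apply, ha, hb]
  | inv a ha =>
    rw [← ha, ← Equiv.Perm.mul_apply, ← map_mul, mul_inv_cancel, map_one, Equiv.Perm.one_apply]

end Plane

/-! ### σ-positive braids -/

/-- The σ-positive braids: those with an expression in which the first generator appears, but its
inverse does not. -/
def sigmaPositive : Subsemigroup Binf :=
  Subsemigroup.closure {g | ∃ a b, g = sh a * σ 0 * sh b}

open Plane in
theorem det_hurwitz_apply_zero_pos {g : Binf} (hg : g ∈ sigmaPositive) {v : ℕ → Plane}
    (hv : Admissible v) : 0 < det (hurwitz Plane g v 0) (v 0) := by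
  have y_pos {w} : Admissible w → 0 < (w 0).y := fun ⟨_, h⟩ => h.y_right_pos 0
  induction hg using Subsemigroup.closure_induction generalizing v with
  | mem _ h =>
    obtain ⟨a, b, rfl⟩ := h
    obtain ⟨c, hc⟩ := (admissible_hurwitz_iff (sh b) v).mpr hv
    rw [map_mul, map_mul, Equiv.Perm.mul_apply, Equiv.Perm.mul_apply, hurwitz_sh_apply_zero,
      hurwitz_σ, hurwitzMove_apply, if_neg (Nat.zero_ne_add_one 0), if_pos rfl,
      ← hurwitz_sh_apply_zero b v, det_act_left]
    exact hc.det_right_pos 0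
  | mul g h _ _ hg hh =>
    have hv' := (admissible_hurwitz_iff h v).mpr hv
    rw [map_mul, Equiv.Perm.mul_apply]
    exact det_pos_trans (y_pos ((admissible_hurwitz_iff g _).mpr hv')).le (y_pos hv') (y_pos hv)
      (hg hv') (hh hv)

theorem sh_notMem_sigmaPositive (b : Binf) : sh b ∉ sigmaPositive := fun hb => by
  obtain ⟨v, hv⟩ := Plane.exists_admissible
  have := det_hurwitz_apply_zero_pos hb hv
  rw [hurwitz_sh_apply_zero, Plane.det, mul_comm, sub_self] at this
  exact this.false

/-! ### Expansions of terms under left self-distributivity -/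

theorem confluent_of_development {α : Type*} {r : α → α → Prop} (d : α → α)
    (self : ∀ a, ReflTransGen r a (d a)) (step : ∀ {a b}, r a b → ReflTransGen r b (d a))
    (mono : ∀ {a b}, r a b → ReflTransGen r (d a) (d b)) {a b c : α}
    (hb : ReflTransGen r a b) (hc : ReflTransGen r a c) : Join (ReflTransGen r) b c := by
  induction hb using ReflTransGen.head_induction_on generalizing c with
  | refl => exact ⟨c, hc, .refl⟩
  | head h _ ih =>
    obtain ⟨e, he, he'⟩ := ih ((step h).trans (hc.lift' d fun _ _ => mono))
    exact ⟨e, he, (self c).trans he'⟩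

section Terms

variable {α : Type*}

/-- Expansion of one subterm of a term by the left self-distributive law. -/
inductive LDStep : FreeMagma α → FreeMagma α → Prop
  | distrib (a b c) : LDStep (a * (b * c)) (a * b * (a * c))
  | left {a a'} (b) : LDStep a a' → LDStep (a * b) (a' * b)
  | right (a) {b b'} : LDStep b b' → LDStep (a * b) (a * b')

/-- Iterated expansion of a term by the left self-distributive law. -/
abbrev LDExpands : FreeMagma α → FreeMagma α → Prop := ReflTransGen LDStep

theorem LDExpands.mul {a a' b b' : FreeMagma α} (ha : LDExpands a a') (hb : LDExpands b b') :
    LDExpands (a * b) (a' * b') :=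
  (ha.lift (· * b) fun _ _ => .left b).trans (hb.lift (a' * ·) fun _ _ => .right a')

/-- Dehornoy's uniform distribution of `t` to the leaves of a term. -/
def distribute (t : FreeMagma α) : FreeMagma α → FreeMagma α
  | .of a => t * .of a
  | .mul u v => distribute t u * distribute t v

/-- Dehornoy's `∂`: a common expansion of all the one-step expansions of a term. -/
def develop : FreeMagma α → FreeMagma α
  | .of a => .of a
  | .mul u v => distribute (develop u) (develop v)

theorem ldExpands_distribute (t u : FreeMagma α) : LDExpands (t * u) (distribute t u) := by
  induction u with
  | ih1 a => exact .refl
  | ih2 u v hu hv => exact .head (.distrib t u v) (hu.mul hv)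

theorem LDExpands.distribute_left {t t' : FreeMagma α} (h : LDExpands t t') (u : FreeMagma α) :
    LDExpands (distribute t u) (distribute t' u) := by
  induction u with
  | ih1 a => exact h.mul .refl
  | ih2 u v hu hv => exact hu.mul hv

theorem LDStep.distribute_right (t : FreeMagma α) {u u' : FreeMagma α} (h : LDStep u u') :
    LDStep (distribute t u) (distribute t u') := by
  induction h with
  | distrib a b c => exact .distrib _ _ _
  | left b _ ih => exact .left _ ih
  | right a _ ih => exact .right _ ih

theorem LDExpands.distribute_right (t : FreeMagma α) {u u' : FreeMagma α} (h : LDExpands u u') :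
    LDExpands (distribute t u) (distribute t u') :=
  h.lift (distribute t) fun _ _ => .distribute_right t

theorem ldExpands_distribute_distribute (a b c : FreeMagma α) :
    LDExpands (distribute a (distribute b c)) (distribute (distribute a b) (distribute a c)) := by
  induction c with
  | ih1 x => exact ldExpands_distribute (distribute a b) (a * .of x)
  | ih2 u v hu hv => exact hu.mul hv

theorem ldExpands_develop (t : FreeMagma α) : LDExpands t (develop t) := by
  induction t with
  | ih1 a => exact .refl
  | ih2 u v hu hv => exact (hu.mul hv).trans (ldExpands_distribute _ _)

theorem LDStep.expands_develop {t t' : FreeMagma α} (h : LDStep t t') :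
    LDExpands t' (develop t) := by
  induction h with
  | distrib a b c =>
    exact ((ldExpands_develop (a * b)).mul (ldExpands_develop (a * c))).trans
      (LDExpands.distribute_right _ (ldExpands_distribute _ _))
  | left b _ ih => exact (ih.mul (ldExpands_develop b)).trans (ldExpands_distribute _ _)
  | right a _ ih => exact ((ldExpands_develop a).mul ih).trans (ldExpands_distribute _ _)

theorem LDStep.develop {t t' : FreeMagma α} (h : LDStep t t') :
    LDExpands (develop t) (develop t') := by
  induction h with
  | distrib a b c => exact ldExpands_distribute_distribute _ _ _
  | left b _ ih => exact ih.distribute_left _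
  | right a _ ih => exact ih.distribute_right _

/-- Left self-distributive equivalence of terms, as existence of a common expansion. -/
abbrev LDEquiv : FreeMagma α → FreeMagma α → Prop := Join LDExpands

theorem LDExpands.ldEquiv {a b : FreeMagma α} (h : LDExpands a b) : LDEquiv a b := ⟨b, h, .refl⟩

theorem LDEquiv.symm {a b : FreeMagma α} (h : LDEquiv a b) : LDEquiv b a := Join.symm.symm _ _ h

theorem LDEquiv.trans {a b c : FreeMagma α} (hab : LDEquiv a b) (hbc : LDEquiv b c) :
    LDEquiv a c :=
  (isTrans_join fun _ _ _ => confluent_of_development develop ldExpands_develop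
    LDStep.expands_develop LDStep.develop).trans _ _ _ hab hbc

theorem LDEquiv.mul_left (a : FreeMagma α) {b b' : FreeMagma α} :
    LDEquiv b b' → LDEquiv (a * b) (a * b') :=
  fun ⟨c, hb, hb'⟩ => ⟨a * c, .mul .refl hb, .mul .refl hb'⟩

/-- `IsLeftFactor t p` says that the term `t` is a product with left factor `p`. -/
inductive IsLeftFactor : FreeMagma α → FreeMagma α → Prop
  | mul (p b) : IsLeftFactor (p * b) p

theorem rightUnique_isLeftFactor : Relator.RightUnique (IsLeftFactor (α := α)) := by
  rintro _ _ _ ⟨⟩ ⟨⟩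
  rfl

theorem LDStep.exists_left_subterm {t t' p : FreeMagma α} (h : LDStep t t')
    (hp : ReflTransGen IsLeftFactor t p) :
    ∃ p', ReflTransGen IsLeftFactor t' p' ∧ LDExpands p p' := by
  induction h with
  | distrib a b c =>
    obtain rfl | ⟨_, ⟨⟩, hp⟩ := hp.cases_head
    · exact ⟨_, .refl, .single (.distrib a b c)⟩
    · exact ⟨p, .head (.mul _ _) (.head (.mul _ _) hp), .refl⟩
  | left b h ih =>
    obtain rfl | ⟨_, ⟨⟩, hp⟩ := hp.cases_head
    · exact ⟨_, .refl, .single (.left b h)⟩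
    · obtain ⟨p', hp', hpp'⟩ := ih hp
      exact ⟨p', .head (.mul _ _) hp', hpp'⟩
  | right a h _ =>
    obtain rfl | ⟨_, ⟨⟩, hp⟩ := hp.cases_head
    · exact ⟨_, .refl, .single (.right a h)⟩
    · exact ⟨p, .head (.mul _ _) hp, .refl⟩

theorem LDExpands.exists_left_subterm {t t' p : FreeMagma α} (h : LDExpands t t')
    (hp : ReflTransGen IsLeftFactor t p) :
    ∃ p', ReflTransGen IsLeftFactor t' p' ∧ LDExpands p p' := by
  induction h with
  | refl => exact ⟨p, hp, .refl⟩
  | tail _ h ih =>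
    obtain ⟨q, hq, hpq⟩ := ih
    obtain ⟨p', hp', hqp'⟩ := h.exists_left_subterm hq
    exact ⟨p', hp', hpq.trans hqp'⟩

/-- The right power `x * (x * (⋯ * x))` with `n + 1` factors. -/
def rightPower (x : FreeMagma α) : ℕ → FreeMagma α
  | 0 => x
  | n + 1 => x * rightPower x n

theorem ldEquiv_mul_rightPower (t : FreeMagma Unit) {n : ℕ} (hn : t.length ≤ n + 1) :
    LDEquiv (t * rightPower (.of ()) n) (rightPower (.of ()) (n + 1)) := by
  induction t generalizing n with
  | ih1 => exact LDExpands.ldEquiv .refl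
  | ih2 a b ha hb =>
    have hab : a.length + b.length ≤ n + 1 := hn
    have := a.length_pos
    have := b.length_pos
    obtain ⟨m, rfl⟩ : ∃ m, n = m + 1 := ⟨n - 1, by omega⟩
    set pow := rightPower (FreeMagma.of ())
    have distrib : LDEquiv (a * (b * pow m)) (a * b * (a * pow m)) :=
      LDExpands.ldEquiv (.single (.distrib _ _ _))
    have absorb_a : LDEquiv (a * b * (a * pow m)) (a * b * pow (m + 1)) :=
      (ha (by omega)).mul_left _
    have absorb_b : LDEquiv (a * (b * pow m)) (a * pow (m + 1)) := (hb (by omega)).mul_left a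
    exact ((distrib.trans absorb_a).symm.trans absorb_b).trans (ha (by omega))

end Terms

/-! ### The comparison property of monogenic shelves -/

section Shelf

variable {α S : Type*} [Shelf S]

/-- The value of a term in a shelf, at an assignment of its variables. -/
def shelfEval (g : α → S) : FreeMagma α → S
  | .of a => g a
  | .mul u v => shelfEval g u ◃ shelfEval g v

theorem shelfEval_mul (g : α → S) (u v : FreeMagma α) :
    shelfEval g (u * v) = shelfEval g u ◃ shelfEval g v := rfl

theorem LDStep.shelfEval_eq {t t' : FreeMagma α} (h : LDStep t t') (g : α → S) :
    shelfEval g t = shelfEval g t' := by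
  induction h with
  | distrib a b c => exact Shelf.self_distrib
  | left b _ ih => rw [shelfEval_mul, shelfEval_mul, ih]
  | right a _ ih => rw [shelfEval_mul, shelfEval_mul, ih]

theorem LDExpands.shelfEval_eq {t t' : FreeMagma α} (h : LDExpands t t') (g : α → S) :
    shelfEval g t = shelfEval g t' := by
  induction h with
  | refl => rfl
  | tail _ h ih => exact ih.trans (h.shelfEval_eq g)

/-- Left divisibility in a shelf; it need not be transitive. -/
def LeftDivides (a b : S) : Prop := ∃ c, b = a ◃ c

theorem reflTransGen_leftDivides_shelfEval (g : α → S) {t p : FreeMagma α}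
    (h : ReflTransGen IsLeftFactor t p) :
    ReflTransGen LeftDivides (shelfEval g p) (shelfEval g t) :=
  (h.lift (p := swap LeftDivides) (shelfEval g) fun _ _ ⟨_, b⟩ => ⟨shelfEval g b, rfl⟩).swap

theorem leftDivides_comparison (g : Unit → S) (s t : FreeMagma Unit) :
    ReflTransGen LeftDivides (shelfEval g s) (shelfEval g t) ∨
      ReflTransGen LeftDivides (shelfEval g t) (shelfEval g s) := by
  have hs := ldEquiv_mul_rightPower s (n := s.length + t.length) (by omega)
  have ht := ldEquiv_mul_rightPower t (n := s.length + t.length) (by omega)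
  obtain ⟨w, hsw, htw⟩ := hs.trans ht.symm
  obtain ⟨s', hs', hss'⟩ := hsw.exists_left_subterm (.single (.mul s _))
  obtain ⟨t', ht', htt'⟩ := htw.exists_left_subterm (.single (.mul t _))
  rw [hss'.shelfEval_eq g, htt'.shelfEval_eq g]
  exact (hs'.total_of_right_unique rightUnique_isLeftFactor ht').symm.imp
    (reflTransGen_leftDivides_shelfEval g) (reflTransGen_leftDivides_shelfEval g)

end Shelf

/-! ### Special braids -/

theorem one_mem_special : 1 ∈ Special := fun _ h _ => h

theorem sc_mem_special {a b : Binf} (ha : a ∈ Special) (hb : b ∈ Special) : sc a b ∈ Special :=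
  fun P one sc => sc a b (ha P one sc) (hb P one sc)

theorem exists_shelfEval_eq_of_mem_special {a : Binf} (ha : a ∈ Special) :
    ∃ t : FreeMagma Unit, shelfEval (fun _ => 1) t = a := by
  refine ha (fun a => ∃ t : FreeMagma Unit, shelfEval (fun _ => 1) t = a) ⟨.of (), rfl⟩ ?_
  rintro _ _ ⟨s, rfl⟩ ⟨t, rfl⟩
  exact ⟨s * t, rfl⟩

theorem LeftDivides.inv_mul_mem_sigmaPositive {a b : Binf} (h : LeftDivides a b) :
    a⁻¹ * b ∈ sigmaPositive := by
  obtain ⟨c, rfl⟩ := h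
  refine Subsemigroup.subset_closure ⟨c, a⁻¹, ?_⟩
  change a⁻¹ * (a * sh c * σ 0 * (sh a)⁻¹) = _
  rw [map_inv]
  group

theorem eq_or_inv_mul_mem_sigmaPositive {a b : Binf} (h : ReflTransGen LeftDivides a b) :
    a = b ∨ a⁻¹ * b ∈ sigmaPositive := by
  induction h with
  | refl => exact .inl rfl
  | @tail b c _ hbc ih =>
    have hbc := hbc.inv_mul_mem_sigmaPositive
    obtain rfl | hab := ih
    · exact .inr hbc
    · have habc := mul_mem hab hbc
      rw [mul_assoc, mul_inv_cancel_left] at habc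
      exact .inr habc

theorem special_eq_of_inv_mul_mem_range_sh {a b : Binf} (ha : a ∈ Special) (hb : b ∈ Special)
    (h : a⁻¹ * b ∈ sh.range) : a = b := by
  have eq_of_divides {a b : Binf} (h : a⁻¹ * b ∈ sh.range) (hab : ReflTransGen LeftDivides a b) :
      a = b := by
    obtain ⟨c, hc⟩ := h
    exact (eq_or_inv_mul_mem_sigmaPositive hab).resolve_right
      (hc ▸ sh_notMem_sigmaPositive c)
  have h' : b⁻¹ * a ∈ sh.range := by simpa only [mul_inv_rev, inv_inv] using inv_mem h
  obtain ⟨s, rfl⟩ := exists_shelfEval_eq_of_mem_special ha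
  obtain ⟨t, rfl⟩ := exists_shelfEval_eq_of_mem_special hb
  exact (leftDivides_comparison _ s t).elim (eq_of_divides h) fun hts => (eq_of_divides h' hts).symm

theorem eq_of_shProd_eq {l m : List Binf} (hlen : l.length = m.length)
    (hl : ∀ x ∈ l, x ∈ Special) (hm : ∀ x ∈ m, x ∈ Special) (h : shProd l = shProd m) :
    l = m := by
  induction l generalizing m with
  | nil => exact (List.length_eq_zero_iff.mp hlen.symm).symm
  | cons a l ih =>
    obtain ⟨b, m, rfl⟩ := List.exists_cons_of_length_eq_add_one hlen.symm
    rw [List.forall_mem_cons] at hl hm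
    change a * sh (shProd l) = b * sh (shProd m) at h
    obtain rfl : a = b := special_eq_of_inv_mul_mem_range_sh hl.1 hm.1
      ⟨shProd l * (shProd m)⁻¹, by
        rw [map_mul, map_inv, mul_inv_eq_iff_eq_mul, mul_assoc, ← h, inv_mul_cancel_left]⟩
    rw [ih (Nat.succ_injective hlen) hl.2 hm.2 (sh_injective (mul_left_cancel h))]

theorem shProd_replicate_one (n : ℕ) : shProd (List.replicate n 1) = 1 := by
  induction n with
  | zero => rfl
  | succ n ih => rw [List.replicate_succ, shProd, ih, map_one, one_mul]

theorem shProd_sc_cons_cons (a b : Binf) (l : List Binf) :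
    shProd (sc a b :: a :: l) = shProd (a :: b :: l) * σ 0 := by
  simp only [shProd, sc, map_mul, mul_assoc, inv_mul_cancel_left,
    (σ_zero_commute_sh_sh (shProd l)).eq]

theorem exists_special_shProd_eq_mul_σ {i : ℕ} {l : List Binf} (hi : i + 2 ≤ l.length)
    (hl : ∀ x ∈ l, x ∈ Special) :
    ∃ m : List Binf, m.length = l.length ∧ (∀ x ∈ m, x ∈ Special) ∧ shProd m = shProd l * σ i := by
  induction i generalizing l with
  | zero =>
    obtain ⟨a, l, rfl⟩ := List.exists_cons_of_length_pos (Nat.zero_lt_of_lt hi)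
    obtain ⟨b, l, rfl⟩ := List.exists_cons_of_length_pos (Nat.lt_of_succ_lt_succ hi)
    simp only [List.forall_mem_cons] at hl
    refine ⟨sc a b :: a :: l, rfl, ?_, shProd_sc_cons_cons a b l⟩
    simp only [List.forall_mem_cons]
    exact ⟨sc_mem_special hl.1 hl.2.1, hl.1, hl.2.2⟩
  | succ i ih =>
    obtain ⟨a, l, rfl⟩ := List.exists_cons_of_length_pos (l := l) (by omega)
    rw [List.forall_mem_cons] at hl
    obtain ⟨m, hlen, hm, hprod⟩ := ih (Nat.le_of_succ_le_succ hi) hl.2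
    refine ⟨a :: m, congrArg (· + 1) hlen, List.forall_mem_cons.mpr ⟨hl.1, hm⟩, ?_⟩
    rw [shProd, shProd, hprod, map_mul, sh_σ, mul_assoc]

theorem exists_special_decomposition {n : ℕ} {b : Binf} (hb : b ∈ BfinPos n) :
    ∃ l : List Binf, l.length = n ∧ (∀ x ∈ l, x ∈ Special) ∧ b = shProd l := by
  unfold BfinPos at hb
  induction hb using Submonoid.closure_induction_right with
  | one =>
    refine ⟨List.replicate n 1, List.length_replicate, fun x hx => ?_,
      (shProd_replicate_one n).symm⟩
    exact List.eq_of_mem_replicate hx ▸ one_mem_special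
  | mul_right b _ _ hs ih =>
    obtain ⟨i, hi, rfl⟩ := hs
    obtain ⟨l, rfl, hl, rfl⟩ := ih
    obtain ⟨m, hlen, hm, hprod⟩ := exists_special_shProd_eq_mul_σ hi hl
    exact ⟨m, hlen, hm, hprod.symm⟩

/-- special decomposition. Every positive braid `β ∈ B_n⁺`
admits a unique decomposition `β = β₁ · sh β₂ ⋯ sh^{n-1} βₙ` with all `βᵢ`
special. -/
theorem special_decomposition (n : ℕ) (hn : 1 ≤ n) (β : Binf)
    (hβ : β ∈ BfinPos n) :
    ∃! l : List Binf,
      l.length = n ∧ (∀ x ∈ l, x ∈ Special) ∧ β = shProd l := by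
  obtain ⟨l, hlen, hl, hprod⟩ := exists_special_decomposition hβ
  refine ⟨l, ⟨hlen, hl, hprod⟩, ?_⟩
  rintro m ⟨hlen', hm, hprod'⟩
  exact eq_of_shProd_eq (hlen'.trans hlen.symm) hm hl (hprod'.symm.trans hprod)
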